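/- (qth Power Law.) For every prime p, every real β > 0, and every f ∈ ℂ, the series Z(f, ℤ_p, β) and Z(f, pℤ_p, β) converge absolutely and satisfy Z(f, ℤ_p, β) = (Z(f, pℤ_p, β))^p. -/

import Mathlib

open MeasureTheory
open scoped LinearAlgebra.Projectivization

namespace LogCoulomb

noncomputable section

/-! ### The projective line over `ℚ_p`, its spherical metric and `PGL₂`-invariant measure -/

variable (p : ℕ) [Fact p.Prime]

instance : MeasurableSpace ℚ_[p] := borel _
instance : BorelSpace ℚ_[p] := ⟨rfl⟩

/-- The projective line over `ℚ_p`. -/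
abbrev P1 := ℙ ℚ_[p] (Fin 2 → ℚ_[p])

instance : TopologicalSpace (P1 p) :=
  inferInstanceAs (TopologicalSpace (Quotient _))

instance : MeasurableSpace (P1 p) := borel _
instance : BorelSpace (P1 p) := ⟨rfl⟩

/-- Spherical distance on homogeneous coordinates:
`δ((x₀,x₁),(y₀,y₁)) = |x₀y₁ - x₁y₀| / (max(|x₀|,|x₁|) ⬝ max(|y₀|,|y₁|))`. -/
def sdelta (x y : Fin 2 → ℚ_[p]) : ℝ :=
  ‖x 0 * y 1 - x 1 * y 0‖ / (max ‖x 0‖ ‖x 1‖ * max ‖y 0‖ ‖y 1‖)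

/-- The spherical metric on `ℙ¹(ℚ_p)`, defined via the canonical representatives. -/
def pdelta (ξ η : P1 p) : ℝ := sdelta p ξ.rep η.rep

open Classical in
/-- The action of a matrix on `ℙ¹(ℚ_p)`: `[x₀:x₁] ↦ [a x₀ + b x₁ : c x₀ + d x₁]`
(well-defined, and given by the first branch of the `if`, whenever `A` is invertible). -/
def mobius (A : Matrix (Fin 2) (Fin 2) ℚ_[p]) (ξ : P1 p) : P1 p :=
  if h : A.mulVec ξ.rep ≠ 0 then Projectivization.mk ℚ_[p] (A.mulVec ξ.rep) h else ξ

/-- `ν` is invariant under the action of `GL₂(ℤ_p)` on `ℙ¹(ℚ_p)`; membership of the matrix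
entries in `ℤ_p`, and invertibility of the matrix over `ℤ_p`, are phrased via the `p`-adic
norm on `ℚ_p`. -/
def IsGLInvariant (ν : Measure (P1 p)) : Prop :=
  ∀ A : Matrix (Fin 2) (Fin 2) ℚ_[p],
    (∀ i j, ‖A i j‖ ≤ 1) → ‖A.det‖ = 1 →
      ∀ M : Set (P1 p), MeasurableSet M → ν (mobius p A '' M) = ν M

/-- The embedding `ι : ℚ_p → ℙ¹(ℚ_p)`, `x ↦ [x : 1]`. -/
def iota (x : ℚ_[p]) : P1 p :=
  Projectivization.mk ℚ_[p] ![x, 1] (by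
    intro h
    have h1 := congrFun h 1
    simp at h1)

/-! ### Canonical partition functions -/

/-- The pairs `(i,j)` with `i < j`. -/
def pairs (N : ℕ) : Finset (Fin N × Fin N) := Finset.univ.filter fun q => q.1 < q.2

/-- The closed unit ball `ℤ_p = R` inside `ℚ_p`. -/
def Zball : Set ℚ_[p] := {x | ‖x‖ ≤ 1}

/-- The open unit ball `pℤ_p = P` inside `ℚ_p`. -/
def Pball : Set ℚ_[p] := {x | ‖x‖ < 1}

/-- The one-component canonical partition function
`Z_N(X, β) = ∫_{X^N} ∏_{i<j} |x_i - x_j|^β dμ^N` (as a Bochner integral, whether or not it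
converges absolutely). -/
def ZN (μ : Measure ℚ_[p]) [SigmaFinite μ] (X : Set ℚ_[p]) (N : ℕ) (β : ℂ) : ℂ :=
  ∫ x : Fin N → ℚ_[p], ∏ q ∈ pairs N, (‖x q.1 - x q.2‖ : ℂ) ^ β
    ∂(Measure.pi fun _ => μ.restrict X)

/-- The multivariate canonical partition function
`𝒵_I(X, s) = ∫_{X^I} ∏_{i<j, i,j ∈ I} |x_i - x_j|^{s_{ij}} dμ^I` for a subset `I ⊆ [N]`. -/
def ZI (μ : Measure ℚ_[p]) [SigmaFinite μ] (X : Set ℚ_[p]) {N : ℕ} (I : Finset (Fin N))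
    (s : Fin N → Fin N → ℂ) : ℂ :=
  ∫ x : I → ℚ_[p],
    ∏ q ∈ Finset.univ.filter (fun q : (↥I) × (↥I) => (q.1 : Fin N) < (q.2 : Fin N)),
      (‖x q.1 - x q.2‖ : ℂ) ^ s q.1.1 q.2.1
    ∂(Measure.pi fun _ => μ.restrict X)

/-- The multivariate canonical partition function
`𝒵_N(ℙ¹(ℚ_p), s) = ∫_{(ℙ¹(ℚ_p))^N} ∏_{i<j} δ(ξ_i,ξ_j)^{s_{ij}} dν^N`. -/
def ZP1s (ν : Measure (P1 p)) [SigmaFinite ν] (N : ℕ) (s : Fin N → Fin N → ℂ) : ℂ :=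
  ∫ x : Fin N → P1 p, ∏ q ∈ pairs N, ((pdelta p (x q.1) (x q.2) : ℝ) : ℂ) ^ s q.1 q.2
    ∂(Measure.pi fun _ => ν)

/-- The one-component canonical partition function `Z_N(ℙ¹(ℚ_p), β)`. -/
def ZP1 (ν : Measure (P1 p)) [SigmaFinite ν] (N : ℕ) (β : ℂ) : ℂ :=
  ∫ x : Fin N → P1 p, ∏ q ∈ pairs N, ((pdelta p (x q.1) (x q.2) : ℝ) : ℂ) ^ β
    ∂(Measure.pi fun _ => ν)

/-! ### The quadratic recurrence -/

/-- The factor `ρ_{N,k}(t,β)` appearing in the quadratic recurrence; here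
`N.choose 2 = N(N-1)/2`. -/
def rho (N k : ℕ) (t : ℝ) (β : ℂ) : ℂ :=
  if t = 0 then
    (((N : ℂ) + (N.choose 2 : ℂ) * β) * (1 - 2 * (k : ℂ) / (N : ℂ)) + 1) /
      (((N : ℂ) + (N.choose 2 : ℂ) * β) - 1)
  else
    Complex.sinh (((t : ℂ) / 2) * (((N : ℂ) + (N.choose 2 : ℂ) * β) * (1 - 2 * (k : ℂ) / (N : ℂ)) + 1)) /
      Complex.sinh (((t : ℂ) / 2) * (((N : ℂ) + (N.choose 2 : ℂ) * β) - 1))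

/-- The quadratic recurrence: `F 0 = F 1 = 1` and
`F N t β = ∑_{k=1}^{N-1} (k/N) ρ_{N,k}(t,β) F_{N-k}(t,β) F_k(t,β)` for `N ≥ 2`. -/
def F : ℕ → ℝ → ℂ → ℂ
  | 0, _, _ => 1
  | 1, _, _ => 1
  | N + 2, t, β =>
    ∑ k ∈ (Finset.Icc 1 (N + 1)).attach,
      (((k : ℕ) : ℂ) / ((N : ℂ) + 2)) * rho (N + 2) k t β *
        F (N + 2 - (k : ℕ)) t β * F (k : ℕ) t β
  decreasing_by
  all_goals
    have hk := Finset.mem_Icc.mp k.2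
    omega

/-! ### Splitting chains -/

/-- A splitting chain `Λ_0 > Λ_1 > ⋯ > Λ_L` of set partitions of the subset `I ⊆ [N]`,
beginning with the trivial partition `{I}` and ending with the partition of `I` into
singletons.  (The values `Λ ℓ` for `ℓ > L` are required to be `∅`, so that a chain is
determined by the genuine data `Λ_0, …, Λ_L`.) -/
structure SplChain (N : ℕ) (I : Finset (Fin N)) where
  L : ℕ
  Λ : ℕ → Finset (Finset (Fin N))
  nonempty_mem : ∀ ℓ ≤ L, ∀ B ∈ Λ ℓ, B.Nonempty
  subset_mem : ∀ ℓ ≤ L, ∀ B ∈ Λ ℓ, B ⊆ I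
  cover : ∀ ℓ ≤ L, ∀ i ∈ I, ∃! B, B ∈ Λ ℓ ∧ i ∈ B
  first : Λ 0 = {I}
  last : Λ L = I.image fun i => {i}
  refines : ∀ ℓ < L, ∀ B ∈ Λ (ℓ + 1), ∃ C ∈ Λ ℓ, B ⊆ C
  strict : ∀ ℓ < L, Λ (ℓ + 1) ≠ Λ ℓ
  trailing : ∀ ℓ, L < ℓ → Λ ℓ = ∅

variable {N : ℕ} {I : Finset (Fin N)}

/-- The branches of a splitting chain: the non-singleton parts,
`ℬ(𝔖) = (Λ_0 ∪ ⋯ ∪ Λ_{L-1}) \ Λ_L`. -/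
def SplChain.branches (S : SplChain N I) : Finset (Finset (Fin N)) :=
  ((Finset.range S.L).biUnion S.Λ) \ S.Λ S.L

/-- The depth `ℓ_𝔖(λ) = max {ℓ : λ ∈ Λ_ℓ}` of a branch. -/
def SplChain.depth (S : SplChain N I) (lam : Finset (Fin N)) : ℕ :=
  ((Finset.range (S.L + 1)).filter fun ℓ => lam ∈ S.Λ ℓ).sup id

/-- The degree `deg_𝔖(λ) = #{λ' ∈ Λ_{ℓ_𝔖(λ)+1} : λ' ⊆ λ}` of a branch. -/
def SplChain.degree (S : SplChain N I) (lam : Finset (Fin N)) : ℕ :=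
  ((S.Λ (S.depth lam + 1)).filter fun lam' => lam' ⊆ lam).card

/-- A splitting chain is reduced if every branch appears in exactly one partition of the
chain (namely the one at its depth). -/
def SplChain.Reduced (S : SplChain N I) : Prop :=
  ∀ lam ∈ S.branches, ∀ ℓ ≤ S.L, (lam ∈ S.Λ ℓ ↔ ℓ = S.depth lam)

/-- `e_λ(s) = #λ - 1 + ∑_{i<j, i,j ∈ λ} s_{ij}`. -/
def eexp (lam : Finset (Fin N)) (s : Fin N → Fin N → ℂ) : ℂ :=
  (lam.card : ℂ) - 1 + ∑ q ∈ (pairs N).filter fun q => q.1 ∈ lam ∧ q.2 ∈ lam, s q.1 q.2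

/-- Membership in `Ω_I`: `Re e_λ(s) > 0` for every `λ ⊆ I` with `#λ > 1`. -/
def InOmega (I : Finset (Fin N)) (s : Fin N → Fin N → ℂ) : Prop :=
  ∀ lam ⊆ I, 1 < lam.card → 0 < (eexp lam s).re


/-- The multivariate canonical partition function `𝒵_N(ℤ_p, s)` over `Fin N`-indexed tuples. -/
def ZNs (μ : Measure ℚ_[p]) [SigmaFinite μ] (X : Set ℚ_[p]) (N : ℕ)
    (s : Fin N → Fin N → ℂ) : ℂ :=
  ∫ x : Fin N → ℚ_[p], ∏ q ∈ pairs N, (‖x q.1 - x q.2‖ : ℂ) ^ s q.1 q.2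
    ∂(Measure.pi fun _ => μ.restrict X)

/-- The ball `p^v ℤ_p = {x : |x| ≤ p^{-v}}` in `ℚ_p`. -/
def pvball (v : ℤ) : Set ℚ_[p] := {x | ‖x‖ ≤ (p : ℝ) ^ (-v)}

/-- `G_N(q,β) = N! q^{(1/2)(N choose 2)β} F_N(log q, β)`. -/
def GN (N : ℕ) (β : ℂ) (q : ℝ) : ℂ :=
  (N.factorial : ℂ) * (q : ℂ) ^ ((N.choose 2 : ℂ) * β / 2) * F N (Real.log q) β

/-- `H_N(q,β)`, the efficient formula for `Z_N(ℙ¹(K),β)` as a function of `q`. -/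
def HN (N : ℕ) (β : ℂ) (q : ℝ) : ℂ :=
  (N.factorial : ℂ) * ∑ k ∈ Finset.range (N + 1),
    Complex.cosh (((Real.log q : ℂ) / 2) * ((N : ℂ) + (N.choose 2 : ℂ) * β) *
          (1 - 2 * (k : ℂ) / (N : ℂ))) /
        (2 * Complex.cosh ((Real.log q : ℂ) / 2)) ^ N *
      F (N - k) (Real.log q) β * F k (Real.log q) β

end

section Helpers

open Classical in
/-- symmetric form of the integrand -/
noncomputable def gg {p : ℕ} [Fact p.Prime] (β : ℝ) {ι : Type} [Fintype ι] (x : ι → ℚ_[p]) : ℝ :=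
  ∏ i, ∏ j, if i = j then 1 else ‖x i - x j‖ ^ (β / 2)

/-- symmetric form of the partition function -/
noncomputable def VV {p : ℕ} [Fact p.Prime] (μ : Measure ℚ_[p]) [SigmaFinite μ] (β : ℝ)
    (ι : Type) [Fintype ι] (X : Set ℚ_[p]) : ℝ :=
  ∫ x : ι → ℚ_[p], gg β x ∂(Measure.pi fun _ => μ.restrict X)

variable {p : ℕ} [Fact p.Prime]

lemma gg_equiv (β : ℝ) {ι ι' : Type} [Fintype ι] [Fintype ι'] (e : ι ≃ ι') (x : ι' → ℚ_[p]) :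
    gg β (fun i => x (e i)) = gg β x := by
  classical
  unfold gg
  rw [← Equiv.prod_comp e]
  refine Finset.prod_congr rfl fun i _ => ?_
  rw [← Equiv.prod_comp e]
  refine Finset.prod_congr rfl fun j _ => ?_
  simp

lemma gg_nonneg (β : ℝ) {ι : Type} [Fintype ι] (x : ι → ℚ_[p]) : 0 ≤ gg β x := by
  classical
  unfold gg
  refine Finset.prod_nonneg fun i _ => Finset.prod_nonneg fun j _ => ?_
  split_ifs <;> positivity

lemma gg_le_one {β : ℝ} (hβ : 0 < β) {ι : Type} [Fintype ι] (x : ι → ℚ_[p])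
    (hx : ∀ i, ‖x i‖ ≤ 1) : gg β x ≤ 1 := by
  classical
  unfold gg
  refine Finset.prod_le_one (fun i _ => Finset.prod_nonneg fun j _ => ?_)
    fun i _ => Finset.prod_le_one (fun j _ => ?_) fun j _ => ?_
  · split_ifs <;> positivity
  · split_ifs <;> positivity
  · split_ifs
    · exact le_rfl
    · refine Real.rpow_le_one (norm_nonneg _) ?_ (by positivity)
      have := IsUltrametricDist.norm_add_le_max (x i) (-x j)
      rw [norm_neg, ← sub_eq_add_neg] at this
      exact this.trans (max_le (hx i) (hx j))

lemma gg_continuous {β : ℝ} (hβ : 0 < β) {ι : Type} [Fintype ι] :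
    Continuous (gg β : (ι → ℚ_[p]) → ℝ) := by
  classical
  unfold gg
  refine continuous_finsetProd _ fun i _ => continuous_finsetProd _ fun j _ => ?_
  split_ifs
  · exact continuous_const
  · refine Continuous.rpow_const (by fun_prop) fun x => Or.inr (by positivity)

lemma gg_split (β : ℝ) {ι : Type} [Fintype ι] (q : ι → Prop) [DecidablePred q] (x : ι → ℚ_[p])
    (h : ∀ i, q i → ∀ j, ¬ q j → ‖x i - x j‖ = 1) :
    gg β x = gg β (fun i : {i // q i} => x i) * gg β (fun i : {i // ¬ q i} => x i) := by
  classical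
  unfold gg
  rw [← Fintype.prod_subtype_mul_prod_subtype q]
  congr 1
  · refine Finset.prod_congr rfl fun i _ => ?_
    rw [← Fintype.prod_subtype_mul_prod_subtype q]
    rw [Finset.prod_eq_one (s := (Finset.univ : Finset {i // ¬ q i}))]
    · rw [mul_one]
      refine Finset.prod_congr rfl fun j _ => ?_
      simp [Subtype.ext_iff]
    · intro j _
      rw [h i i.2 j j.2]; simp
  · refine Finset.prod_congr rfl fun i _ => ?_
    rw [← Fintype.prod_subtype_mul_prod_subtype q]
    rw [Finset.prod_eq_one (s := (Finset.univ : Finset {i // q i}))]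
    · rw [one_mul]
      refine Finset.prod_congr rfl fun j _ => ?_
      simp [Subtype.ext_iff]
    · intro j _
      rw [norm_sub_rev, h j j.2 i i.2]; simp

lemma VV_equiv (μ : Measure ℚ_[p]) [SigmaFinite μ] (β : ℝ) {ι ι' : Type} [Fintype ι] [Fintype ι']
    (e : ι ≃ ι') (X : Set ℚ_[p]) : VV μ β ι X = VV μ β ι' X := by
  unfold VV
  have h := measurePreserving_piCongrLeft (fun _ : ι' => μ.restrict X) e
  rw [← h.integral_comp']
  refine integral_congr_ae (Filter.Eventually.of_forall fun x => ?_)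
  simp only
  rw [← gg_equiv β e]
  congr 1
  ext i
  exact (Equiv.piCongrLeft_apply_apply (fun _ : ι' => ℚ_[p]) e x i).symm

lemma gg_integrableOn (μ : Measure ℚ_[p]) [SigmaFinite μ] (hμ : μ (Zball p) = 1) {β : ℝ}
    (hβ : 0 < β) {ι : Type} [Fintype ι] (Y : ι → Set ℚ_[p]) (hm : ∀ i, MeasurableSet (Y i))
    (hY : ∀ i, Y i ⊆ Zball p) :
    IntegrableOn (gg β) (Set.univ.pi Y) (Measure.pi fun _ : ι => μ) := by
  refine Measure.integrableOn_of_bounded (M := 1) ?_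
    (gg_continuous hβ).aestronglyMeasurable ?_
  · rw [Measure.pi_pi]
    refine (ENNReal.prod_lt_top fun i _ => ?_).ne
    exact (measure_mono (hY i)).trans_lt (by simp [hμ])
  · refine (ae_restrict_iff' (MeasurableSet.univ_pi hm)).2 (Filter.Eventually.of_forall ?_)
    intro x hx
    rw [Real.norm_of_nonneg (gg_nonneg _ _)]
    exact gg_le_one hβ x fun i => hY i (hx i trivial)

lemma VV_block (μ : Measure ℚ_[p]) [SigmaFinite μ] (β : ℝ)
    (ι : Type) [Fintype ι] (q : ι → Prop) [DecidablePred q] (A B : Set ℚ_[p])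
    (hA : MeasurableSet A) (hB : MeasurableSet B)
    (hAB : ∀ a ∈ A, ∀ b ∈ B, ‖a - b‖ = 1) :
    ∫ x : ι → ℚ_[p], gg β x ∂(Measure.pi fun i => μ.restrict (if q i then A else B)) =
      VV μ β {i // q i} A * VV μ β {i // ¬ q i} B := by
  unfold VV
  rw [← integral_prod_mul]
  have h := measurePreserving_piEquivPiSubtypeProd
    (fun i => μ.restrict (if q i then A else B)) q
  have e1 : (Measure.pi fun i : {i // q i} => μ.restrict (if q i then A else B)) =
      Measure.pi fun i : {i // q i} => μ.restrict A := by
    congr 1; ext1 i; simp [i.2]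
  have e2 : (Measure.pi fun i : {i // ¬ q i} => μ.restrict (if q i then A else B)) =
      Measure.pi fun i : {i // ¬ q i} => μ.restrict B := by
    congr 1; ext1 i; simp [i.2]
  rw [e1, e2] at h
  rw [← h.integral_comp', ← Measure.restrict_pi_pi]
  refine setIntegral_congr_fun (MeasurableSet.univ_pi fun i => ?_) fun x hx => ?_
  · split_ifs <;> assumption
  refine gg_split β q x fun i hi j hj => ?_
  have h1 := hx i trivial
  have h2 := hx j trivial
  simp only [hi, hj, if_true, if_false] at h1 h2
  exact hAB _ h1 _ h2

lemma VV_union (μ : Measure ℚ_[p]) [SigmaFinite μ] (hμ : μ (Zball p) = 1) {β : ℝ}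
    (hβ : 0 < β) (ι : Type) [Fintype ι] [DecidableEq ι] (A B : Set ℚ_[p])
    (hA : MeasurableSet A) (hB : MeasurableSet B) (hAZ : A ⊆ Zball p) (hBZ : B ⊆ Zball p)
    (hAB : ∀ a ∈ A, ∀ b ∈ B, ‖a - b‖ = 1) :
    VV μ β ι (A ∪ B) = ∑ s ∈ (Finset.univ : Finset ι).powerset,
      VV μ β {i // i ∈ s} A * VV μ β {i // ¬ i ∈ s} B := by
  have hdis : ∀ a ∈ A, a ∉ B := fun a ha hb => by simpa using hAB a ha a hb
  set Y : Finset ι → ι → Set ℚ_[p] := fun s i => if i ∈ s then A else B with hYdef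
  have hYm : ∀ s i, MeasurableSet (Y s i) := fun s i => by
    simp only [hYdef]; split_ifs <;> assumption
  have hYZ : ∀ s i, Y s i ⊆ Zball p := fun s i => by
    simp only [hYdef]; split_ifs <;> assumption
  have hU : (Set.univ.pi fun _ : ι => A ∪ B) =
      ⋃ s ∈ (Finset.univ : Finset ι).powerset, Set.univ.pi (Y s) := by
    classical
    ext x
    simp only [Set.mem_pi, Set.mem_univ, true_imp_iff, Set.mem_iUnion, Finset.mem_powerset,
      Finset.subset_univ, exists_prop, true_and, hYdef]
    constructor
    · intro h
      refine ⟨Finset.univ.filter fun i => x i ∈ A, fun i => ?_⟩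
      by_cases hi : x i ∈ A
      · simp [hi]
      · simpa [hi] using h i
    · rintro ⟨s, hs⟩ i
      have := hs i
      split_ifs at this
      · exact Or.inl this
      · exact Or.inr this
  rw [VV, ← Measure.restrict_pi_pi, hU, integral_biUnion_finset]
  · refine Finset.sum_congr rfl fun s _ => ?_
    rw [Measure.restrict_pi_pi]
    refine (VV_block μ β ι (fun i => i ∈ s) A B hA hB hAB).trans ?_
    congr 1
    exact @VV_equiv p _ μ _ β _ _ (_) (_) (Equiv.refl _) A
  · exact fun s _ => MeasurableSet.univ_pi (hYm s)
  · intro s _ t _ hst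
    rw [Function.onFun, Set.disjoint_left]
    intro x hxs hxt
    apply hst
    ext i
    have h1 := hxs i trivial
    have h2 := hxt i trivial
    simp only [hYdef] at h1 h2
    by_cases hi : i ∈ s <;> by_cases hj : i ∈ t <;> simp only [hi, hj, if_true, if_false] at h1 h2 ⊢
    · exact (hdis _ h1 h2).elim
    · exact (hdis _ h2 h1).elim
  · exact fun s _ => gg_integrableOn μ hμ hβ _ (hYm s) (hYZ s)

lemma VV_union_fin (μ : Measure ℚ_[p]) [SigmaFinite μ] (hμ : μ (Zball p) = 1) {β : ℝ}
    (hβ : 0 < β) (N : ℕ) (A B : Set ℚ_[p])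
    (hA : MeasurableSet A) (hB : MeasurableSet B) (hAZ : A ⊆ Zball p) (hBZ : B ⊆ Zball p)
    (hAB : ∀ a ∈ A, ∀ b ∈ B, ‖a - b‖ = 1) :
    VV μ β (Fin N) (A ∪ B) = ∑ k ∈ Finset.range (N + 1),
      (N.choose k : ℝ) * (VV μ β (Fin k) A * VV μ β (Fin (N - k)) B) := by
  rw [VV_union μ hμ hβ (Fin N) A B hA hB hAZ hBZ hAB]
  have := Finset.sum_powerset_apply_card
    (fun k => VV μ β (Fin k) A * VV μ β (Fin (N - k)) B) (x := (Finset.univ : Finset (Fin N)))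
  simp only [Finset.card_univ, Fintype.card_fin, nsmul_eq_mul] at this
  rw [← this]
  refine Finset.sum_congr rfl fun s _ => ?_
  rw [VV_equiv μ β (Fintype.equivFinOfCardEq (by simp) : {i // i ∈ s} ≃ Fin s.card),
    VV_equiv μ β (Fintype.equivFinOfCardEq ?_ : {i // ¬ i ∈ s} ≃ Fin (N - s.card))]
  rw [Fintype.card_subtype_compl]; simp

lemma VV_bound (μ : Measure ℚ_[p]) [SigmaFinite μ] (hμ : μ (Zball p) = 1) {β : ℝ}
    (hβ : 0 < β) (ι : Type) [Fintype ι] (A : Set ℚ_[p]) (hA : MeasurableSet A)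
    (hAZ : A ⊆ Zball p) : |VV μ β ι A| ≤ 1 := by
  unfold VV
  have hle : μ A ≤ 1 := hμ ▸ measure_mono hAZ
  rw [← Measure.restrict_pi_pi]
  have hm : (Measure.pi fun _ : ι => μ) (Set.univ.pi fun _ => A) ≤ 1 := by
    rw [Measure.pi_pi]; exact Finset.prod_le_one' fun _ _ => hle
  have := norm_setIntegral_le_of_norm_le_const (f := gg β) (C := 1)
    (μ := Measure.pi fun _ : ι => μ) (s := Set.univ.pi fun _ => A)
    (hm.trans_lt ENNReal.one_lt_top) (fun x hx => by
      rw [Real.norm_of_nonneg (gg_nonneg _ _)]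
      exact gg_le_one hβ x fun i => hAZ (hx i trivial))
  refine this.trans ?_
  rw [one_mul]
  exact ENNReal.toReal_le_of_le_ofReal zero_le_one (by simpa using hm)

lemma VV_translate (μ : Measure ℚ_[p]) [SigmaFinite μ] [μ.IsAddHaarMeasure] (β : ℝ)
    (ι : Type) [Fintype ι] (A : Set ℚ_[p]) (hA : MeasurableSet A) (c : ℚ_[p]) :
    VV μ β ι ((fun x => x - c) ⁻¹' A) = VV μ β ι A := by
  unfold VV
  have h0 : MeasurePreserving (MeasurableEquiv.subRight c) μ μ := measurePreserving_sub_right μ c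
  have h1 := h0.restrict_preimage hA
  have h2 := measurePreserving_arrowCongr' (fun _ : ι => μ.restrict ((fun x => x - c) ⁻¹' A))
    (fun _ : ι => μ.restrict A) (Equiv.refl ι) (MeasurableEquiv.subRight c) (fun _ => h1)
  rw [← h2.integral_comp']
  refine integral_congr_ae (Filter.Eventually.of_forall fun x => ?_)
  classical
  have : (MeasurableEquiv.arrowCongr' (Equiv.refl ι) (MeasurableEquiv.subRight c)) x
    = fun i => x i - c := rfl
  simp only [this, gg, sub_sub_sub_cancel_right]

lemma ZN_eq (μ : Measure ℚ_[p]) [SigmaFinite μ] (X : Set ℚ_[p]) (N : ℕ) (β : ℝ) :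
    ZN p μ X N (β : ℂ) = (VV μ β (Fin N) X : ℂ) := by
  classical
  unfold ZN VV
  rw [← integral_complex_ofReal]
  refine integral_congr_ae (Filter.Eventually.of_forall fun x => ?_)
  simp only
  have key : ∏ q ∈ pairs N, ‖x q.1 - x q.2‖ ^ β = gg β x := by
    have h1 : ∀ q : Fin N × Fin N, ‖x q.1 - x q.2‖ ^ β =
        ‖x q.1 - x q.2‖ ^ (β / 2) * ‖x q.2 - x q.1‖ ^ (β / 2) := by
      intro q
      rw [norm_sub_rev (x q.2), ← sq, ← Real.rpow_natCast, ← Real.rpow_mul (norm_nonneg _)]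
      congr 1; push_cast; ring
    rw [Finset.prod_congr rfl fun q _ => h1 q, Finset.prod_mul_distrib]
    unfold gg pairs
    rw [← Finset.prod_product', Finset.univ_product_univ]
    rw [Finset.prod_filter, Finset.prod_filter]
    rw [← Equiv.prod_comp (Equiv.prodComm (Fin N) (Fin N))
      (fun q => if q.1 < q.2 then ‖x q.2 - x q.1‖ ^ (β / 2) else 1)]
    rw [← Finset.prod_mul_distrib]
    refine Finset.prod_congr rfl fun q _ => ?_
    simp only [Equiv.prodComm_apply, Prod.fst_swap, Prod.snd_swap]
    rcases lt_trichotomy q.1 q.2 with h | h | h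
    · simp [h, h.ne, not_lt.2 h.le]
    · simp [h]
    · simp [h, h.ne', not_lt.2 h.le]
  rw [← key, Complex.ofReal_prod]
  refine Finset.prod_congr rfl fun q _ => ?_
  rw [Complex.ofReal_cpow (norm_nonneg _)]

/-- terms of the grand canonical series -/
noncomputable def tt (μ : Measure ℚ_[p]) [SigmaFinite μ] (β : ℝ) (f : ℂ) (X : Set ℚ_[p]) (N : ℕ) : ℂ :=
  ZN p μ X N (β : ℂ) * f ^ N / (N.factorial : ℂ)

lemma tt_summable (μ : Measure ℚ_[p]) [SigmaFinite μ] (hμ : μ (Zball p) = 1) {β : ℝ}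
    (hβ : 0 < β) (f : ℂ) (A : Set ℚ_[p]) (hA : MeasurableSet A) (hAZ : A ⊆ Zball p) :
    Summable (fun N => ‖tt μ β f A N‖) := by
  refine Summable.of_nonneg_of_le (fun _ => norm_nonneg _) (fun N => ?_)
    (Real.summable_pow_div_factorial ‖f‖)
  unfold tt
  rw [ZN_eq, norm_div, norm_mul, norm_pow, Complex.norm_real, Complex.norm_natCast]
  gcongr
  exact mul_le_of_le_one_left (by positivity) (VV_bound μ hμ hβ _ A hA hAZ)

lemma tt_union (μ : Measure ℚ_[p]) [SigmaFinite μ] (hμ : μ (Zball p) = 1) {β : ℝ}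
    (hβ : 0 < β) (f : ℂ) (A B : Set ℚ_[p])
    (hA : MeasurableSet A) (hB : MeasurableSet B) (hAZ : A ⊆ Zball p) (hBZ : B ⊆ Zball p)
    (hAB : ∀ a ∈ A, ∀ b ∈ B, ‖a - b‖ = 1) :
    ∑' N, tt μ β f (A ∪ B) N = (∑' N, tt μ β f A N) * ∑' N, tt μ β f B N := by
  rw [tsum_mul_tsum_eq_tsum_sum_range_of_summable_norm (tt_summable μ hμ hβ f A hA hAZ)
    (tt_summable μ hμ hβ f B hB hBZ)]
  refine tsum_congr fun N => ?_
  unfold tt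
  rw [ZN_eq, VV_union_fin μ hμ hβ N A B hA hB hAZ hBZ hAB, Complex.ofReal_sum, Finset.sum_mul,
    Finset.sum_div]
  refine Finset.sum_congr rfl fun k hk => ?_
  have hk' : k ≤ N := Nat.lt_succ_iff.1 (Finset.mem_range.1 hk)
  rw [ZN_eq, ZN_eq]
  push_cast
  rw [Nat.cast_choose ℂ hk', ← Nat.add_sub_cancel' hk', pow_add]
  simp only [Nat.add_sub_cancel_left, Nat.add_sub_cancel']
  have h1 : (k.factorial : ℂ) ≠ 0 := by exact_mod_cast k.factorial_ne_zero
  have h2 : ((N-k).factorial : ℂ) ≠ 0 := by exact_mod_cast (N-k).factorial_ne_zero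
  have h3 : ((k + (N-k)).factorial : ℂ) ≠ 0 := by exact_mod_cast (k + (N-k)).factorial_ne_zero
  field_simp

/-- union of the first `k` residue discs -/
def UU (p : ℕ) [Fact p.Prime] (k : ℕ) : Set ℚ_[p] := {x | ∃ a : ℕ, a < k ∧ ‖x - (a : ℚ_[p])‖ < 1}

lemma Pball_meas : MeasurableSet (Pball p) :=
  (isOpen_lt continuous_norm continuous_const).measurableSet

lemma pre_meas (c : ℚ_[p]) : MeasurableSet ((fun x => x - c) ⁻¹' Pball p) :=
  (measurable_id.sub_const c) Pball_meas

lemma UU_succ (k : ℕ) : UU p (k + 1) = UU p k ∪ ((fun x => x - (k : ℚ_[p])) ⁻¹' Pball p) := by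
  ext x
  simp only [UU, Pball, Set.mem_ofPred_eq, Set.mem_union, Set.mem_preimage]
  constructor
  · rintro ⟨a, ha, h⟩
    rcases Nat.lt_succ_iff_lt_or_eq.1 ha with h' | rfl
    · exact Or.inl ⟨a, h', h⟩
    · exact Or.inr h
  · rintro (⟨a, ha, h⟩ | h)
    · exact ⟨a, by omega, h⟩
    · exact ⟨k, by omega, h⟩

lemma UU_one : UU p 1 = Pball p := by
  ext x; simp [UU, Pball]

lemma UU_meas (k : ℕ) : MeasurableSet (UU p k) := by
  induction k with
  | zero => simp [UU]
  | succ k ih =>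
    rw [UU_succ]
    exact ih.union ((pre_meas _))

lemma UU_sub (k : ℕ) : UU p k ⊆ Zball p := by
  rintro x ⟨a, -, h⟩
  have h2 : ‖(a : ℚ_[p])‖ ≤ 1 := by exact_mod_cast Padic.norm_int_le_one (p := p) a
  have := IsUltrametricDist.norm_add_le_max (x - (a : ℚ_[p])) a
  rw [sub_add_cancel] at this
  exact this.trans (max_le h.le h2)

lemma UU_p : UU p p = Zball p := by
  refine (UU_sub p).antisymm fun x hx => ?_
  have hx' : ‖x‖ ≤ 1 := hx
  obtain ⟨y, hy⟩ : ∃ y : ℤ_[p], (y : ℚ_[p]) = x := ⟨⟨x, hx'⟩, rfl⟩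
  obtain ⟨n, hn, h⟩ := PadicInt.exists_mem_range (p := p) y
  refine ⟨n, hn, ?_⟩
  have := PadicInt.mem_nonunits.1 ((IsLocalRing.mem_maximalIdeal _).1 h)
  rw [PadicInt.norm_def, PadicInt.coe_sub, PadicInt.coe_natCast, hy] at this
  exact this

lemma UU_cross {k : ℕ} (hk : k < p) (a : ℚ_[p]) (ha : a ∈ UU p k) (b : ℚ_[p])
    (hb : b ∈ (fun x => x - (k : ℚ_[p])) ⁻¹' Pball p) : ‖a - b‖ = 1 := by
  obtain ⟨n, hn, h⟩ := ha
  have hb' : ‖(k : ℚ_[p]) - b‖ < 1 := by rw [norm_sub_rev]; exact hb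
  have h1 : ‖(n : ℚ_[p]) - k‖ = 1 := by
    have : ((n : ℚ_[p]) - k) = ((n - k : ℤ) : ℚ_[p]) := by push_cast; rfl
    rw [this]
    refine le_antisymm (Padic.norm_int_le_one _) (not_lt.1 fun hlt => ?_)
    rw [Padic.norm_intCast_lt_one_iff] at hlt
    have := Int.eq_zero_of_abs_lt_dvd hlt (by rw [abs_lt]; omega)
    omega
  have h2 : ‖(a - n) + (k - b)‖ < 1 :=
    (IsUltrametricDist.norm_add_le_max _ _).trans_lt (max_lt h hb')
  have h3 : a - b = ((a - n) + (k - b)) + (n - k) := by ring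
  rw [h3, IsUltrametricDist.norm_add_eq_max_of_norm_ne_norm (by rw [h1]; exact h2.ne), h1,
    max_eq_right h2.le]

lemma tt_UU (μ : Measure ℚ_[p]) [SigmaFinite μ] [μ.IsAddHaarMeasure] (hμ : μ (Zball p) = 1)
    {β : ℝ} (hβ : 0 < β) (f : ℂ) (k : ℕ) (hk : k < p) :
    ∑' N, tt μ β f (UU p (k + 1)) N = (∑' N, tt μ β f (Pball p) N) ^ (k + 1) := by
  induction k with
  | zero => simp [UU_one]
  | succ k ih =>
    have hs := UU_sub (p := p) (k + 1 + 1)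
    rw [UU_succ] at hs
    rw [UU_succ (k + 1), tt_union μ hμ hβ f _ _ (UU_meas _)
      ((pre_meas _)) (UU_sub _) (Set.subset_union_right.trans hs)
      (UU_cross hk), ih (by omega), pow_succ _ (k + 1)]
    congr 1
    refine tsum_congr fun N => ?_
    unfold tt
    rw [ZN_eq, ZN_eq, VV_translate μ β _ _ Pball_meas]

end Helpers

theorem statement_7 (p : ℕ) [Fact p.Prime]
    (μ : Measure ℚ_[p]) [SigmaFinite μ] [μ.IsAddHaarMeasure] (hμ : μ (Zball p) = 1)
    (β : ℝ) (hβ : 0 < β) (f : ℂ) :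
    Summable (fun N => ‖ZN p μ (Zball p) N (β : ℂ) * f ^ N / (N.factorial : ℂ)‖) ∧
    Summable (fun N => ‖ZN p μ (Pball p) N (β : ℂ) * f ^ N / (N.factorial : ℂ)‖) ∧
    (∑' N, ZN p μ (Zball p) N (β : ℂ) * f ^ N / (N.factorial : ℂ)) =
      (∑' N, ZN p μ (Pball p) N (β : ℂ) * f ^ N / (N.factorial : ℂ)) ^ p := by
  have hP : Pball p ⊆ Zball p := fun x hx => le_of_lt (a := ‖x‖) (b := 1) hx
  have hZ : MeasurableSet (Zball p) := (UU_p (p := p)) ▸ UU_meas p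
  refine ⟨tt_summable μ hμ hβ f _ hZ le_rfl, tt_summable μ hμ hβ f _ Pball_meas hP, ?_⟩
  have hp := (Fact.out : p.Prime).pos
  have h := tt_UU μ hμ hβ f (p - 1) (by omega)
  rw [Nat.sub_add_cancel hp, UU_p] at h
  exact h

end LogCoulomb
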